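/- Let x, y, z be points of a CAT(0) space with x ≠ y and x ≠ z, and let c(t) parametrize the geodesic [x,y] with c(0) = x. Then lim_{t→0} ∠_{c(t)}(x,z) = lim_{t→0} ∠̄_{c(t)}(x,z) = π − ∠_x(y,z). -/

import Mathlib

noncomputable section

open Metric Set Filter Real Pointwise

/-! ## Geodesics and CAT(0) spaces -/

variable {X : Type*}

/-- A geodesic segment from `x` to `y`, parametrized by arclength on `[0, dist x y]`. -/
def IsGeodesicSegment [MetricSpace X] (f : ℝ → X) (x y : X) : Prop :=
  f 0 = x ∧ f (dist x y) = y ∧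
    ∀ s ∈ Set.Icc (0:ℝ) (dist x y), ∀ t ∈ Set.Icc (0:ℝ) (dist x y),
      dist (f s) (f t) = |s - t|

/-- A geodesic metric space: every pair of points is joined by a geodesic. -/
def GeodesicSpace (X : Type*) [MetricSpace X] : Prop :=
  ∀ x y : X, ∃ f : ℝ → X, IsGeodesicSegment f x y

/-- A CAT(0) space: a geodesic space satisfying the CN-inequality of Bruhat–Tits
(equivalent to the CAT(0) comparison inequality for complete geodesic spaces). -/
def CAT0Space (X : Type*) [MetricSpace X] : Prop :=
  GeodesicSpace X ∧
    ∀ x y z m : X, dist y m = dist y z / 2 → dist z m = dist y z / 2 →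
      dist x m ^ 2 ≤ (dist x y ^ 2 + dist x z ^ 2) / 2 - dist y z ^ 2 / 4

/-- The geodesic segment `[x,y]` (as a set) in a uniquely geodesic space:
the set of points lying between `x` and `y`. -/
def geodesicSegSet [MetricSpace X] (x y : X) : Set X :=
  {z : X | dist x z + dist z y = dist x y}

/-- A complete geodesic line, parametrized by arclength. -/
def IsGeodesicLine [MetricSpace X] (c : ℝ → X) : Prop :=
  ∀ s t : ℝ, dist (c s) (c t) = |s - t|

/-- A geodesic ray, parametrized by arclength on `[0,∞)`. -/
def IsGeodesicRay [MetricSpace X] (c : ℝ → X) : Prop :=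
  ∀ s t : ℝ, 0 ≤ s → 0 ≤ t → dist (c s) (c t) = |s - t|

/-- A subset `A` is geodesic if any two of its points are joined by a geodesic inside `A`. -/
def IsGeodesicSubset [MetricSpace X] (A : Set X) : Prop :=
  ∀ x ∈ A, ∀ y ∈ A, ∃ f : ℝ → X, IsGeodesicSegment f x y ∧
    ∀ t ∈ Set.Icc (0:ℝ) (dist x y), f t ∈ A

/-! ## Angles -/

/-- The comparison angle at `p` of the triple `(p,x,y)`: the angle at the vertex corresponding
to `p` in a Euclidean comparison triangle, computed by the law of cosines. -/
def cangle [MetricSpace X] (p x y : X) : ℝ :=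
  Real.arccos ((dist p x ^ 2 + dist p y ^ 2 - dist x y ^ 2) / (2 * dist p x * dist p y))

/-- The (Alexandrov) angle at `p` between the geodesics `[p,x]` and `[p,y]`.  In a CAT(0)
space comparison angles are monotone along the geodesics, so the Alexandrov angle is the
infimum of the comparison angles over interior points of the two segments. -/
def angle [MetricSpace X] (p x y : X) : ℝ :=
  sInf {θ : ℝ | ∃ x' ∈ geodesicSegSet p x, ∃ y' ∈ geodesicSegSet p y,
    x' ≠ p ∧ y' ≠ p ∧ θ = cangle p x' y'}

/-! ## Flats -/

/-- A `k`-flat: an isometrically embedded copy of Euclidean `k`-space. -/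
def IsKFlat [MetricSpace X] (k : ℕ) (F : Set X) : Prop :=
  ∃ f : EuclideanSpace ℝ (Fin k) → X, Isometry f ∧ Set.range f = F

/-- A flat: an isometrically embedded copy of Euclidean `k`-space for some `k ≥ 2`. -/
def IsFlat [MetricSpace X] (F : Set X) : Prop := ∃ k : ℕ, 2 ≤ k ∧ IsKFlat k F

/-- A flat is maximal if it is not contained in a finite tubular neighborhood of a
higher-dimensional flat. -/
def IsMaximalFlat [MetricSpace X] (F : Set X) : Prop :=
  IsFlat F ∧ ¬ ∃ (k k' : ℕ) (F' : Set X) (r : ℝ),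
    IsKFlat k F ∧ IsKFlat k' F' ∧ k < k' ∧ F ⊆ Metric.cthickening r F'

/-! ## Geometric group actions -/

/-- A geometric action: an action by isometries that is properly discontinuous and cocompact. -/
def GeometricAction (Γ X : Type*) [Group Γ] [MetricSpace X] [MulAction Γ X] : Prop :=
  (∀ g : Γ, Isometry fun x : X => g • x) ∧
  (∀ K L : Set X, IsCompact K → IsCompact L → {g : Γ | ((g • K) ∩ L).Nonempty}.Finite) ∧
  ∃ K : Set X, IsCompact K ∧ ⋃ g : Γ, g • K = Set.univ

/-! ## Isolated flats (IF2) -/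

/-- The family `𝓕` witnesses that `X` has isolated flats (formulation (IF2)):
`𝓕` is a `Γ`-invariant family of flats, every flat of `X` lies in a uniformly bounded
tubular neighborhood of a member of `𝓕`, and `ρ`-tubular neighborhoods of distinct members
of `𝓕` have uniformly bounded overlap. -/
structure IsolatedFlatsFamily (Γ : Type*) {X : Type*} [Group Γ] [MetricSpace X]
    [MulAction Γ X] (𝓕 : Set (Set X)) : Prop where
  flats : ∀ F ∈ 𝓕, IsFlat F
  invariant : ∀ (g : Γ), ∀ F ∈ 𝓕, g • F ∈ 𝓕
  exists_bound : ∃ D : ℝ, ∀ F : Set X, IsFlat F → ∃ F' ∈ 𝓕, F ⊆ Metric.cthickening D F'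
  isolated : ∀ ρ : ℝ, ∃ κ : ℝ, ∀ F ∈ 𝓕, ∀ F' ∈ 𝓕, F ≠ F' →
    Metric.diam (Metric.cthickening ρ F ∩ Metric.cthickening ρ F') < κ

/-- `X` has isolated flats (with respect to some family). -/
def HasIsolatedFlats (Γ X : Type*) [Group Γ] [MetricSpace X] [MulAction Γ X] : Prop :=
  ∃ 𝓕 : Set (Set X), IsolatedFlatsFamily Γ 𝓕
/-! ## The ideal boundary and the Tits metric -/

/-- The space of geodesic rays in `X`. -/
abbrev GeodesicRays (X : Type*) [MetricSpace X] := {c : ℝ → X // IsGeodesicRay c}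

/-- Two rays are asymptotic if they are at bounded distance. -/
def asympSetoid (X : Type*) [MetricSpace X] : Setoid (GeodesicRays X) where
  r c c' := ∃ K : ℝ, ∀ t : ℝ, 0 ≤ t → dist (c.1 t) (c'.1 t) ≤ K
  iseqv := by
    refine ⟨fun c => ⟨0, fun t _ => by simp⟩, ?_, ?_⟩
    · rintro c c' ⟨K, hK⟩
      exact ⟨K, fun t ht => by rw [dist_comm]; exact hK t ht⟩
    · rintro a b c ⟨K, hK⟩ ⟨K', hK'⟩
      exact ⟨K + K', fun t ht =>
        (dist_triangle _ (b.1 t) _).trans (add_le_add (hK t ht) (hK' t ht))⟩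

/-- The ideal boundary of `X`: asymptoty classes of geodesic rays. -/
def IdealBoundary (X : Type*) [MetricSpace X] := Quotient (asympSetoid X)

/-- The angle at `p` between two geodesic rays `c, c'` issuing from `p`: in a CAT(0) space
this is the infimum (= decreasing limit) of comparison angles of points along the rays. -/
def rayAngleAt [MetricSpace X] (p : X) (c c' : ℝ → X) : ℝ :=
  sInf {θ : ℝ | ∃ t > (0:ℝ), ∃ t' > (0:ℝ), θ = cangle p (c t) (c' t')}

/-- The angle `∠_p(ξ,η)` at a point `p` between two ideal boundary points, computed using
geodesic rays from `p` representing them. -/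
def angleAtBetween [MetricSpace X] (p : X) (ξ η : IdealBoundary X) : ℝ :=
  sSup {θ : ℝ | ∃ c c' : GeodesicRays X, c.1 0 = p ∧ c'.1 0 = p ∧
    Quotient.mk (asympSetoid X) c = ξ ∧ Quotient.mk (asympSetoid X) c' = η ∧
    θ = rayAngleAt p c.1 c'.1}

/-- The Tits angle metric `∠_T(ξ,η) = sup_p ∠_p(ξ,η)` on the ideal boundary. -/
def titsAngle [MetricSpace X] (ξ η : IdealBoundary X) : ℝ :=
  sSup (Set.range fun p : X => angleAtBetween p ξ η)

/-- The topology induced by the Tits angle metric on the ideal boundary.  (On a proper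
CAT(0) space the Tits angle metric and the Tits length metric `Td` induce the same
topology, and the same isometry types of components consisting of spheres.) -/
def titsTopology (X : Type*) [MetricSpace X] : TopologicalSpace (IdealBoundary X) :=
  TopologicalSpace.generateFrom
    {U : Set (IdealBoundary X) | ∃ (ξ : IdealBoundary X) (ε : ℝ), U = {η | titsAngle ξ η < ε}}

/-- A subset of the Tits boundary is a standard Euclidean sphere if it is isometric (in the
Tits metric) to the unit sphere of a Euclidean space `E^k` with its angular metric. -/
def IsStandardSphere [MetricSpace X] (C : Set (IdealBoundary X)) : Prop :=
  ∃ k : ℕ, 1 ≤ k ∧ ∃ e : IdealBoundary X → EuclideanSpace ℝ (Fin k),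
    (∀ ξ ∈ C, ‖e ξ‖ = 1) ∧
    (∀ v : EuclideanSpace ℝ (Fin k), ‖v‖ = 1 → ∃ ξ ∈ C, e ξ = v) ∧
    Set.InjOn e C ∧
    ∀ ξ ∈ C, ∀ η ∈ C, titsAngle ξ η = Real.arccos (inner ℝ (e ξ) (e η) : ℝ)

/-- Every connected component of the Tits boundary of `X` is an isolated point or a
standard Euclidean sphere. -/
def TitsBoundaryIsolatedOrSpheres (X : Type*) [MetricSpace X] : Prop :=
  ∀ ξ : IdealBoundary X,
    (@connectedComponent _ (titsTopology X) ξ = {ξ} ∧ @IsOpen _ (titsTopology X) {ξ}) ∨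
    IsStandardSphere (@connectedComponent _ (titsTopology X) ξ)

/-- The trace at infinity of a subset `Y ⊆ X`: ideal points represented by rays inside `Y`. -/
def boundaryOfSet [MetricSpace X] (Y : Set X) : Set (IdealBoundary X) :=
  {ξ | ∃ c : GeodesicRays X, Quotient.mk (asympSetoid X) c = ξ ∧ ∀ t : ℝ, 0 ≤ t → c.1 t ∈ Y}
/-! ## Ultrafilters, ultralimits, and asymptotic cones -/

/-- A nonprincipal ultrafilter on `ℕ`. -/
def IsNonprincipal (ω : Ultrafilter ℕ) : Prop := ∀ s : Set ℕ, s.Finite → s ∉ ω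

/-- A real sequence that is bounded along an ultrafilter converges along that
ultrafilter to its `limUnder`. -/
theorem tendsto_limUnder_of_bdd (ω : Ultrafilter ℕ) {u : ℕ → ℝ} {C : ℝ}
    (h : ∀ᶠ n in (ω : Filter ℕ), |u n| ≤ C) :
    Filter.Tendsto u (ω : Filter ℕ) (nhds (limUnder (ω : Filter ℕ) u)) := by
  have hC : 0 ≤ C := by
    obtain ⟨n, hn⟩ := h.exists
    exact (abs_nonneg _).trans hn
  set u' : ℕ → ℝ := fun n => max (-C) (min C (u n)) with hu'
  have hmem : ∀ n, u' n ∈ Set.Icc (-C) C := fun n =>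
    ⟨le_max_left _ _, max_le (by linarith) ((min_le_left _ _))⟩
  have hle : (Ultrafilter.map u' ω : Filter ℝ) ≤ Filter.principal (Set.Icc (-C) C) := by
    rw [Filter.le_principal_iff]
    exact Filter.mem_map.2 (Filter.Eventually.of_forall fun n => hmem n)
  obtain ⟨a, -, ha⟩ := (isCompact_Icc (a := -C) (b := C)).ultrafilter_le_nhds
    (Ultrafilter.map u' ω) hle
  have htu' : Filter.Tendsto u' (ω : Filter ℕ) (nhds a) := ha
  have heq : u' =ᶠ[(ω : Filter ℕ)] u := by
    filter_upwards [h] with n hn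
    have h1 : -C ≤ u n := neg_le_of_abs_le hn
    have h2 : u n ≤ C := le_of_abs_le hn
    simp [hu', min_eq_right h2, max_eq_right h1]
  have htu : Filter.Tendsto u (ω : Filter ℕ) (nhds a) := htu'.congr' heq
  rwa [htu.limUnder_eq]

section Ultralimit

variable (Xs : ℕ → Type*) [∀ n, MetricSpace (Xs n)] (ω : Ultrafilter ℕ)
  (b : ∀ n, Xs n) (l : ℕ → ℝ)

/-- A sequence of points `u n ∈ Xs n` whose rescaled distance to the basepoints is
bounded along `ω`. -/
structure BddSeq where
  seq : ∀ n, Xs n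
  bdd : ∃ C : ℝ, ∀ᶠ n in (ω : Filter ℕ), dist (seq n) (b n) ≤ C * l n

variable (hl : ∀ᶠ n in (ω : Filter ℕ), 0 < l n)

/-- Two sequences represent the same point of the ultralimit when their rescaled
distance tends to zero along `ω`. -/
def ulimSetoid : Setoid (BddSeq Xs ω b l) where
  r u v := ∀ ε : ℝ, 0 < ε → ∀ᶠ n in (ω : Filter ℕ), dist (u.seq n) (v.seq n) ≤ ε * l n
  iseqv := by
    refine ⟨fun u ε hε => ?_, fun {u v} h ε hε => ?_, fun {u v w} h h' ε hε => ?_⟩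
    · filter_upwards [hl] with n hn
      simp [le_of_lt (mul_pos hε hn)]
    · filter_upwards [h ε hε] with n hn
      rwa [dist_comm]
    · filter_upwards [h (ε/2) (by linarith), h' (ε/2) (by linarith)] with n h1 h2
      calc dist (u.seq n) (w.seq n) ≤ dist (u.seq n) (v.seq n) + dist (v.seq n) (w.seq n) :=
            dist_triangle _ _ _
        _ ≤ ε/2 * l n + ε/2 * l n := add_le_add h1 h2
        _ = ε * l n := by ring

/-- The ultralimit `ω-lim (Xs n, dist / l n, b n)` of a sequence of based metric spaces,
rescaled by the scaling constants `l`.  (Asymptotic cones are the special case of a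
constant sequence of spaces with `l → ∞` along `ω`.) -/
def Ultralimit : Type _ := Quotient (ulimSetoid Xs ω b l hl)

variable {Xs ω b l}

theorem bddseq_dist_bdd (hl : ∀ᶠ n in (ω : Filter ℕ), 0 < l n) (x y : BddSeq Xs ω b l) :
    ∃ C : ℝ, ∀ᶠ n in (ω : Filter ℕ), |dist (x.seq n) (y.seq n) / l n| ≤ C := by
  obtain ⟨Cx, hCx⟩ := x.bdd
  obtain ⟨Cy, hCy⟩ := y.bdd
  refine ⟨|Cx| + |Cy|, ?_⟩
  filter_upwards [hCx, hCy, hl] with n h1 h2 h3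
  have hd : dist (x.seq n) (y.seq n) ≤ (|Cx| + |Cy|) * l n := by
    calc dist (x.seq n) (y.seq n) ≤ dist (x.seq n) (b n) + dist (y.seq n) (b n) :=
          dist_triangle_right _ _ _
      _ ≤ Cx * l n + Cy * l n := add_le_add h1 h2
      _ ≤ |Cx| * l n + |Cy| * l n := by
          gcongr <;> [exact le_abs_self Cx; exact le_abs_self Cy]
      _ = (|Cx| + |Cy|) * l n := by ring
  rw [abs_div, abs_of_nonneg dist_nonneg, abs_of_pos h3, div_le_iff₀ h3]
  exact hd

variable {hl}

/-- The distance on the ultralimit: the `ω`-limit of rescaled distances. -/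
def ulimDist (x y : Ultralimit Xs ω b l hl) : ℝ :=
  limUnder (ω : Filter ℕ) fun n => dist (x.out.seq n) (y.out.seq n) / l n

theorem ulimDist_tendsto (x y : Ultralimit Xs ω b l hl) :
    Filter.Tendsto (fun n => dist (x.out.seq n) (y.out.seq n) / l n) (ω : Filter ℕ)
      (nhds (ulimDist x y)) := by
  obtain ⟨C, hC⟩ := bddseq_dist_bdd hl x.out y.out
  exact tendsto_limUnder_of_bdd ω hC

theorem ulimDist_self (x : Ultralimit Xs ω b l hl) : ulimDist x x = 0 := by
  unfold ulimDist
  have : (fun n => dist (x.out.seq n) (x.out.seq n) / l n) = fun _ => (0:ℝ) := by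
    funext n; simp
  rw [this]
  exact Filter.Tendsto.limUnder_eq tendsto_const_nhds

theorem ulimDist_comm (x y : Ultralimit Xs ω b l hl) : ulimDist x y = ulimDist y x := by
  unfold ulimDist
  congr 1
  funext n
  rw [dist_comm]

theorem ulimDist_triangle (x y z : Ultralimit Xs ω b l hl) :
    ulimDist x z ≤ ulimDist x y + ulimDist y z := by
  refine le_of_tendsto_of_tendsto (ulimDist_tendsto x z)
    ((ulimDist_tendsto x y).add (ulimDist_tendsto y z)) ?_
  filter_upwards [hl] with n hn
  rw [← add_div]
  gcongr
  exact dist_triangle _ _ _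

theorem ulimDist_eq_zero {x y : Ultralimit Xs ω b l hl} (h : ulimDist x y = 0) : x = y := by
  have ht0 : Filter.Tendsto (fun n => dist (x.out.seq n) (y.out.seq n) / l n)
      (ω : Filter ℕ) (nhds 0) := h ▸ ulimDist_tendsto x y
  have hrel : (ulimSetoid Xs ω b l hl).r x.out y.out := by
    intro ε hε
    have := (Metric.tendsto_nhds.mp ht0) ε hε
    filter_upwards [this, hl] with n h1 h2
    rw [Real.dist_eq, sub_zero, abs_div, abs_of_nonneg dist_nonneg, abs_of_pos h2,
      div_lt_iff₀ h2] at h1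
    exact h1.le
  have : Quotient.mk (ulimSetoid Xs ω b l hl) x.out = Quotient.mk (ulimSetoid Xs ω b l hl) y.out :=
    Quot.sound hrel
  exact (Quotient.out_eq x).symm.trans (this.trans (Quotient.out_eq y))

/-- The ultralimit of a sequence of based metric spaces is a metric space. -/
instance ultralimitMetricSpace : MetricSpace (Ultralimit Xs ω b l hl) where
  dist := ulimDist
  dist_self := ulimDist_self
  dist_comm := ulimDist_comm
  dist_triangle := ulimDist_triangle
  eq_of_dist_eq_zero := ulimDist_eq_zero

end Ultralimit
section Cones

variable (X : Type*) [MetricSpace X] (ω : Ultrafilter ℕ) (b : ℕ → X) (l : ℕ → ℝ)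
  (hl : ∀ᶠ n in (ω : Filter ℕ), 0 < l n)

/-- The asymptotic cone `Cone_ω(X, b, l)`: the ultralimit of the based spaces
`(X, dist / l n, b n)`. -/
def AsymptoticCone : Type _ := Ultralimit (fun _ => X) ω b l hl

instance : MetricSpace (AsymptoticCone X ω b l hl) := ultralimitMetricSpace

/-- The `ω`-limit of a sequence of subsets `A n ⊆ X` inside the asymptotic cone. -/
def ulimSet (A : ℕ → Set X) : Set (AsymptoticCone X ω b l hl) :=
  {x | ∃ u : BddSeq (fun _ => X) ω b l, Quotient.mk (ulimSetoid (fun _ => X) ω b l hl) u = x ∧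
    ∀ᶠ n in (ω : Filter ℕ), u.seq n ∈ A n}

/-- The collection `𝓐_ω` of subsets of the asymptotic cone induced by a collection `𝓐`
of subsets of `X`: ultralimits of sequences in `𝓐` which stay at bounded rescaled
distance from the basepoints. -/
def coneFamily (𝓐 : Set (Set X)) : Set (Set (AsymptoticCone X ω b l hl)) :=
  {A | ∃ An : ℕ → Set X, (∀ n, An n ∈ 𝓐) ∧
    (∃ C : ℝ, ∀ᶠ n in (ω : Filter ℕ), ∃ p ∈ An n, dist p (b n) ≤ C * l n) ∧
    A = ulimSet X ω b l hl An}

end Cones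

/-! ## Tree-graded spaces and relative hyperbolicity -/

section TreeGraded

variable (Y : Type*) [MetricSpace Y]

/-- A simple geodesic triangle: a simple loop made of three geodesic segments. -/
def SimpleGeodesicTriangle (T : Set Y) : Prop :=
  ∃ (x y z : Y) (f g h : ℝ → Y),
    IsGeodesicSegment f x y ∧ IsGeodesicSegment g y z ∧ IsGeodesicSegment h z x ∧
    T = f '' Set.Icc 0 (dist x y) ∪ g '' Set.Icc 0 (dist y z) ∪ h '' Set.Icc 0 (dist z x) ∧
    f '' Set.Icc 0 (dist x y) ∩ g '' Set.Icc 0 (dist y z) = {y} ∧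
    g '' Set.Icc 0 (dist y z) ∩ h '' Set.Icc 0 (dist z x) = {z} ∧
    h '' Set.Icc 0 (dist z x) ∩ f '' Set.Icc 0 (dist x y) = {x}

/-- A complete geodesic space is tree-graded with respect to a collection `P` of closed
geodesic subsets (pieces) if distinct pieces meet in at most one point and every simple
geodesic triangle is contained in a single piece. -/
def IsTreeGraded (P : Set (Set Y)) : Prop :=
  (∀ A ∈ P, IsClosed A ∧ IsGeodesicSubset A) ∧
  (∀ A ∈ P, ∀ B ∈ P, A ≠ B → (A ∩ B).Subsingleton) ∧
  (∀ T : Set Y, SimpleGeodesicTriangle Y T → ∃ A ∈ P, T ⊆ A)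

end TreeGraded

/-- A metric space `X` is relatively hyperbolic with respect to a collection `𝓐` of
subsets if every asymptotic cone of `X` (over a nonprincipal ultrafilter, with scaling
constants tending to infinity along the ultrafilter) is tree-graded with respect to the
induced collection `𝓐_ω`. -/
def RelativelyHyperbolicSpace (X : Type*) [MetricSpace X] (𝓐 : Set (Set X)) : Prop :=
  ∀ (ω : Ultrafilter ℕ), IsNonprincipal ω →
    ∀ (b : ℕ → X) (l : ℕ → ℝ) (hl : Filter.Tendsto l (ω : Filter ℕ) Filter.atTop),
      IsTreeGraded (AsymptoticCone X ω b l (hl.eventually (Filter.eventually_gt_atTop 0)))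
        (coneFamily X ω b l (hl.eventually (Filter.eventually_gt_atTop 0)) 𝓐)
/-! ## Word metrics on groups -/

section WordMetric

variable {Γ : Type*} [Group Γ]

/-- The set of lengths of words over `S ∪ S⁻¹` representing `g`. -/
def wordLengthSet (S : Set Γ) (g : Γ) : Set ℕ :=
  {n : ℕ | ∃ w : List Γ, w.length = n ∧ (∀ x ∈ w, x ∈ S ∨ x⁻¹ ∈ S) ∧ w.prod = g}

/-- The word length of `g` with respect to the generating set `S`. -/
def wordLength (S : Set Γ) (g : Γ) : ℕ := sInf (wordLengthSet S g)

theorem wordLengthSet_nonempty {S : Set Γ} (hS : Subgroup.closure S = ⊤) (g : Γ) :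
    (wordLengthSet S g).Nonempty := by
  have hg : g ∈ Subgroup.closure S := hS ▸ Subgroup.mem_top g
  have hg' : g ∈ (Subgroup.closure S).toSubmonoid := hg
  rw [Subgroup.closure_toSubmonoid] at hg'
  obtain ⟨w, hw, hprod⟩ := Submonoid.exists_list_of_mem_closure hg'
  refine ⟨w.length, w, rfl, fun x hx => ?_, hprod⟩
  rcases hw x hx with h | h
  · exact Or.inl h
  · exact Or.inr (Set.mem_inv.mp h)

theorem wordLength_one (S : Set Γ) : wordLength S 1 = 0 :=
  Nat.eq_zero_of_le_zero (Nat.sInf_le ⟨[], rfl, by simp, by simp⟩)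

theorem wordLengthSet_inv_subset (S : Set Γ) (g : Γ) :
    wordLengthSet S g ⊆ wordLengthSet S g⁻¹ := by
  rintro n ⟨w, hlen, hmem, hprod⟩
  refine ⟨(w.map fun x => x⁻¹).reverse, by simp [hlen], ?_, ?_⟩
  · intro x hx
    simp only [List.mem_reverse, List.mem_map] at hx
    obtain ⟨a, ha, rfl⟩ := hx
    rcases hmem a ha with h' | h'
    · exact Or.inr (by simpa using h')
    · exact Or.inl h'
  · rw [← List.prod_inv_reverse, hprod]

theorem wordLengthSet_inv (S : Set Γ) (g : Γ) :
    wordLengthSet S g⁻¹ = wordLengthSet S g := by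
  refine le_antisymm ?_ (wordLengthSet_inv_subset S g)
  have := wordLengthSet_inv_subset S g⁻¹
  rwa [inv_inv] at this

theorem wordLength_inv (S : Set Γ) (g : Γ) : wordLength S g⁻¹ = wordLength S g := by
  unfold wordLength
  rw [wordLengthSet_inv]

theorem wordLength_mul {S : Set Γ} (hS : Subgroup.closure S = ⊤) (g h : Γ) :
    wordLength S (g * h) ≤ wordLength S g + wordLength S h := by
  obtain ⟨w1, hlen1, hmem1, hprod1⟩ := Nat.sInf_mem (wordLengthSet_nonempty hS g)
  obtain ⟨w2, hlen2, hmem2, hprod2⟩ := Nat.sInf_mem (wordLengthSet_nonempty hS h)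
  refine Nat.sInf_le ⟨w1 ++ w2, ?_, ?_, by simp [hprod1, hprod2]⟩
  · rw [List.length_append, hlen1, hlen2]; rfl
  · intro x hx
    rcases List.mem_append.mp hx with h' | h'
    · exact hmem1 x h'
    · exact hmem2 x h'

/-- The word metric on a group `Γ`, with respect to a generating set `S`. -/
def wordMetricSpace (Γ : Type*) [Group Γ] (S : Set Γ)
    (hS : Subgroup.closure S = ⊤) : MetricSpace Γ where
  dist g h := (wordLength S (g⁻¹ * h) : ℝ)
  dist_self g := by simp [wordLength_one]
  dist_comm g h := by
    show (wordLength S (g⁻¹ * h) : ℝ) = (wordLength S (h⁻¹ * g) : ℝ)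
    have := wordLength_inv S (g⁻¹ * h)
    rw [mul_inv_rev, inv_inv] at this
    rw [← this]
  dist_triangle g k h := by
    show (wordLength S (g⁻¹ * h) : ℝ) ≤ (wordLength S (g⁻¹ * k) : ℝ) + (wordLength S (k⁻¹ * h) : ℝ)
    have := wordLength_mul hS (g⁻¹ * k) (k⁻¹ * h)
    have h2 : g⁻¹ * k * (k⁻¹ * h) = g⁻¹ * h := by group
    rw [h2] at this
    exact_mod_cast this
  eq_of_dist_eq_zero := by
    intro g h hd
    have hd' : (wordLength S (g⁻¹ * h) : ℝ) = 0 := hd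
    have h0 : wordLength S (g⁻¹ * h) = 0 := by exact_mod_cast hd'
    rcases (Nat.sInf_eq_zero.mp h0) with h1 | h1
    · obtain ⟨w, hlen, -, hprod⟩ := h1
      have hw : w = [] := List.length_eq_zero_iff.mp hlen
      rw [hw] at hprod
      simp only [List.prod_nil] at hprod
      exact (inv_mul_eq_one.mp hprod.symm)
    · exact absurd h1 (wordLengthSet_nonempty hS _).ne_empty

end WordMetric
/-! ## Relatively hyperbolic groups (Bowditch, via the Druţu–Sapir characterization) -/

/-- A subgroup is virtually abelian of rank at least two if it contains a finite-index
free abelian subgroup of rank at least two. -/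
def IsVirtuallyAbelianOfRankAtLeastTwo {Γ : Type*} [Group Γ] (P : Subgroup Γ) : Prop :=
  ∃ H : Subgroup Γ, H ≤ P ∧ H.relIndex P ≠ 0 ∧
    ∃ k : ℕ, 2 ≤ k ∧ Nonempty (H ≃* Multiplicative (Fin k → ℤ))

/-- A subgroup is virtually abelian if it contains an abelian subgroup of finite index. -/
def IsVirtuallyAbelian {Γ : Type*} [Group Γ] (H : Subgroup Γ) : Prop :=
  ∃ A : Subgroup Γ, A ≤ H ∧ A.relIndex H ≠ 0 ∧ ∀ a ∈ A, ∀ b ∈ A, a * b = b * a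

/-- The left coset `gP` of a subgroup, as a subset of the group. -/
def leftCosetSet {Γ : Type*} [Group Γ] (g : Γ) (P : Subgroup Γ) : Set Γ :=
  {x : Γ | ∃ p ∈ P, x = g * p}

/-- `Γ` is a relatively hyperbolic group with respect to a collection of virtually abelian
subgroups of rank at least two: equipped with a word metric, `Γ` is relatively hyperbolic
as a metric space with respect to the left cosets of the subgroups. -/
def GroupRelHypVirtAbelian (Γ : Type*) [Group Γ] : Prop :=
  ∃ (S : Finset Γ) (hS : Subgroup.closure (S : Set Γ) = ⊤) (𝓐 : Set (Subgroup Γ)),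
    (∀ P ∈ 𝓐, IsVirtuallyAbelianOfRankAtLeastTwo P) ∧
    @RelativelyHyperbolicSpace Γ (wordMetricSpace Γ (S : Set Γ) hS)
      {B : Set Γ | ∃ (g : Γ) (P : Subgroup Γ), P ∈ 𝓐 ∧ B = leftCosetSet g P}

/-- `X` is relatively hyperbolic with respect to some family of flats. -/
def RelHypWrtFlats (X : Type*) [MetricSpace X] : Prop :=
  ∃ 𝓕 : Set (Set X), (∀ F ∈ 𝓕, IsFlat F) ∧ RelativelyHyperbolicSpace X 𝓕

/-! ## The space of flats, (IF1), parallel sets -/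

/-- The set of all flats in `X`. -/
abbrev Flats (X : Type*) [MetricSpace X] := {F : Set X // IsFlat F}

/-- The topology of Hausdorff convergence on bounded sets on the space of flats of `X`. -/
def flatsTopology (X : Type*) [MetricSpace X] : TopologicalSpace (Flats X) :=
  TopologicalSpace.generateFrom
    {U : Set (Flats X) | ∃ (C₀ : Set X) (x₀ : X) (r ε : ℝ), 0 < r ∧ 0 < ε ∧
      U = {C : Flats X | EMetric.hausdorffEdist (C.1 ∩ Metric.closedBall x₀ r)
            (C₀ ∩ Metric.closedBall x₀ r) < ENNReal.ofReal ε}}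

/-- Formulation (IF1) of isolated flats: there is a `Γ`-invariant family `𝓕` of flats
that is closed and isolated in the space of flats, and every flat of `X` lies in a
uniformly bounded tubular neighborhood of a member of `𝓕`. -/
def HasIF1 (Γ X : Type*) [Group Γ] [MetricSpace X] [MulAction Γ X] : Prop :=
  ∃ 𝓕 : Set (Set X),
    (∀ F ∈ 𝓕, IsFlat F) ∧
    (∀ (g : Γ), ∀ F ∈ 𝓕, g • F ∈ 𝓕) ∧
    @IsClosed (Flats X) (flatsTopology X) {F : Flats X | F.1 ∈ 𝓕} ∧
    (∀ F : Flats X, F.1 ∈ 𝓕 → ∃ U : Set (Flats X), @IsOpen (Flats X) (flatsTopology X) U ∧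
      U ∩ {F' : Flats X | F'.1 ∈ 𝓕} = {F}) ∧
    ∃ D : ℝ, ∀ F : Set X, IsFlat F → ∃ F' ∈ 𝓕, F ⊆ Metric.cthickening D F'

/-- The parallel set of a geodesic line `c`: the union of all geodesic lines at finite
Hausdorff distance from `c`. -/
def parallelSet {X : Type*} [MetricSpace X] (c : ℝ → X) : Set X :=
  {x : X | ∃ c' : ℝ → X, IsGeodesicLine c' ∧
    EMetric.hausdorffEdist (Set.range c) (Set.range c') ≠ ⊤ ∧ x ∈ Set.range c'}

/-- `X` has thin parallel sets: the parallel set of every geodesic line in a maximal flat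
`F` lies in a finite tubular neighborhood of `F`. -/
def HasThinParallelSets (X : Type*) [MetricSpace X] : Prop :=
  ∀ c : ℝ → X, IsGeodesicLine c → ∀ F : Set X, IsMaximalFlat F → Set.range c ⊆ F →
    ∃ r : ℝ, parallelSet c ⊆ Metric.cthickening r F

/-- `X` has uniformly thin parallel sets: thin parallel sets with a uniform bound on the
thickness of the tubular neighborhoods. -/
def HasUniformlyThinParallelSets (X : Type*) [MetricSpace X] : Prop :=
  ∃ r : ℝ, ∀ c : ℝ → X, IsGeodesicLine c → ∀ F : Set X, IsMaximalFlat F → Set.range c ⊆ F →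
    parallelSet c ⊆ Metric.cthickening r F

/-- `X` has slim parallel sets: the Tits boundary of the parallel set of every geodesic
line in a maximal flat `F` equals the Tits boundary of `F`. -/
def HasSlimParallelSets (X : Type*) [MetricSpace X] : Prop :=
  ∀ c : ℝ → X, IsGeodesicLine c → ∀ F : Set X, IsMaximalFlat F → Set.range c ⊆ F →
    boundaryOfSet (parallelSet c) = boundaryOfSet F

/-! ## Quasi-isometric embeddings, quasigeodesics, fellow travelling -/

/-- An `(L,C)`-quasi-isometric embedding. -/
def QIEmbedding {Y X : Type*} [MetricSpace Y] [MetricSpace X] (L C : ℝ) (f : Y → X) : Prop :=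
  ∀ y y' : Y, (1/L) * dist y y' - C ≤ dist (f y) (f y') ∧
    dist (f y) (f y') ≤ L * dist y y' + C

/-- A `(λ,ε)`-quasigeodesic, defined on the interval `[0,a]`. -/
def Quasigeodesic {X : Type*} [MetricSpace X] (lam eps : ℝ) (α : ℝ → X) (a : ℝ) : Prop :=
  ∀ s ∈ Set.Icc (0:ℝ) a, ∀ t ∈ Set.Icc (0:ℝ) a,
    (1/lam) * |s - t| - eps ≤ dist (α s) (α t) ∧ dist (α s) (α t) ≤ lam * |s - t| + eps

/-- Two paths `α : [0,a] → X` and `α' : [0,a'] → X` `L`-fellow travel relative to a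
sequence of flats. -/
def FellowTravelRelFlats {X : Type*} [MetricSpace X] (L : ℝ) (α α' : ℝ → X)
    (a a' : ℝ) : Prop :=
  ∃ (n : ℕ) (Fs : Fin n → Set X), (∀ i, IsFlat (Fs i)) ∧
  ∃ t s t' s' : Fin (n+1) → ℝ,
    t 0 = 0 ∧ s (Fin.last n) = a ∧ t' 0 = 0 ∧ s' (Fin.last n) = a' ∧
    (∀ i : Fin (n+1), t i ≤ s i) ∧ (∀ i : Fin n, s i.castSucc ≤ t i.succ) ∧
    (∀ i : Fin (n+1), t' i ≤ s' i) ∧ (∀ i : Fin n, s' i.castSucc ≤ t' i.succ) ∧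
    (∀ i : Fin (n+1),
      Metric.hausdorffDist (α '' Set.Icc (t i) (s i)) (α' '' Set.Icc (t' i) (s' i)) ≤ L) ∧
    (∀ i : Fin n,
      α '' Set.Icc (s i.castSucc) (t i.succ) ⊆ Metric.cthickening L (Fs i) ∧
      α' '' Set.Icc (s' i.castSucc) (t' i.succ) ⊆ Metric.cthickening L (Fs i))

/-! ## Quasiconvex and undistorted subgroups -/

/-- A quasiconvex subset of a geodesic space: all geodesics between its points stay in a
bounded neighborhood of it. -/
def QuasiconvexSubset {X : Type*} [MetricSpace X] (Y : Set X) : Prop :=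
  ∃ κ : ℝ, ∀ x ∈ Y, ∀ y ∈ Y, ∀ f : ℝ → X, IsGeodesicSegment f x y →
    ∀ t ∈ Set.Icc (0:ℝ) (dist x y), f t ∈ Metric.cthickening κ Y

/-- The orbit of a point under a subgroup. -/
def orbitSet {Γ X : Type*} [Group Γ] [MulAction Γ X] (H : Subgroup Γ) (x₀ : X) : Set X :=
  {x : X | ∃ h ∈ H, x = h • x₀}

/-- A subgroup `H ≤ Γ` is undistorted: the inclusion is a quasi-isometric embedding with
respect to word metrics. -/
def UndistortedSubgroup {Γ : Type*} [Group Γ] (H : Subgroup Γ) : Prop :=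
  ∃ (S : Finset Γ) (T : Finset H),
    Subgroup.closure (S : Set Γ) = ⊤ ∧ Subgroup.closure (T : Set H) = ⊤ ∧
    ∃ L C : ℝ, 0 < L ∧ 0 ≤ C ∧ ∀ h h' : H,
      (1/L) * (wordLength ((T : Set H)) (h⁻¹ * h') : ℝ) - C ≤
          (wordLength ((S : Set Γ)) ((h : Γ)⁻¹ * (h' : Γ)) : ℝ) ∧
        (wordLength ((S : Set Γ)) ((h : Γ)⁻¹ * (h' : Γ)) : ℝ) ≤
          L * (wordLength ((T : Set H)) (h⁻¹ * h') : ℝ) + C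
/-! ## Biautomatic groups -/

section Biautomatic

variable {Γ : Type*} [Group Γ]

/-- The group element represented by a word in the generators. -/
def wordProd {A : Finset Γ} (w : List {x : Γ // x ∈ A}) : Γ :=
  (w.map Subtype.val).prod

/-- The path in `Γ` traced out by a word: at time `n` it is at the product of the first
`n` letters. -/
def wordPath {A : Finset Γ} (w : List {x : Γ // x ∈ A}) (n : ℕ) : Γ :=
  ((w.map Subtype.val).take n).prod

/-- A group is biautomatic if it admits a finite generating set `A` and a regular
language `L` over `A` surjecting onto the group, whose paths satisfy the two-sided
`k`-fellow traveller property. -/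
def Biautomatic (Γ : Type*) [Group Γ] : Prop :=
  ∃ A : Finset Γ, Subgroup.closure (A : Set Γ) = ⊤ ∧
    ∃ L : Language {x : Γ // x ∈ A}, L.IsRegular ∧
      (∀ g : Γ, ∃ w ∈ L, wordProd w = g) ∧
      ∃ k : ℕ, ∀ (a : {x : Γ // x ∈ A}) (u v : List {x : Γ // x ∈ A}),
        u ∈ L → v ∈ L →
        (wordProd u = wordProd v * a.1 →
          ∀ n : ℕ, wordLength (A : Set Γ) ((wordPath u n)⁻¹ * wordPath v n) ≤ k) ∧
        (wordProd u = a.1 * wordProd v →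
          ∀ n : ℕ, wordLength (A : Set Γ) ((wordPath u n)⁻¹ * (a.1 * wordPath v n)) ≤ k)

end Biautomatic

/-! ## The cone topology on the ideal boundary, and the boundary action -/

/-- The topology of uniform convergence on compact sets on the space of geodesic rays
(since rays are `1`-Lipschitz this coincides with the topology of pointwise
convergence). -/
def raysTopology (X : Type*) [MetricSpace X] : TopologicalSpace (GeodesicRays X) :=
  TopologicalSpace.induced (fun c : GeodesicRays X => (c.1 : ℝ → X)) Pi.topologicalSpace

/-- The cone topology on the ideal boundary of a proper CAT(0) space: the quotient of the
topology of uniform convergence on compact sets on the space of geodesic rays. -/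
def coneTopologyBoundary (X : Type*) [MetricSpace X] : TopologicalSpace (IdealBoundary X) :=
  TopologicalSpace.coinduced (Quotient.mk (asympSetoid X)) (raysTopology X)

/-- The induced action of an isometric group action on the ideal boundary. -/
def boundarySMul {Γ X : Type*} [Group Γ] [MetricSpace X] [MulAction Γ X]
    (hiso : ∀ g : Γ, Isometry fun x : X => g • x) (g : Γ) :
    IdealBoundary X → IdealBoundary X :=
  Quotient.lift
    (fun c : GeodesicRays X => Quotient.mk (asympSetoid X)
      (⟨fun t => g • c.1 t, fun s t hs ht => by
        simpa using (hiso g).dist_eq (c.1 s) (c.1 t) ▸ c.2 s t hs ht⟩ : GeodesicRays X))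
    (by
      rintro c c' ⟨K, hK⟩
      apply Quot.sound
      exact ⟨K, fun t ht => by
        simpa using ((hiso g).dist_eq (c.1 t) (c'.1 t)) ▸ hK t ht⟩)

/-! ## Flat half-planes and flat sectors -/

/-- A flat half-plane meeting `F` orthogonally: an isometrically embedded Euclidean
half-plane whose boundary line lies in `F` and which leaves `F` at angle `π/2`. -/
def FlatHalfPlaneOrthogonal {Y : Type*} [MetricSpace Y] (F : Set Y) : Prop :=
  ∃ h : {v : EuclideanSpace ℝ (Fin 2) // 0 ≤ v 1} → Y,
    Isometry h ∧
    (∀ v : {v : EuclideanSpace ℝ (Fin 2) // 0 ≤ v 1}, v.1 1 = 0 → h v ∈ F) ∧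
    ∀ (v : {v : EuclideanSpace ℝ (Fin 2) // 0 ≤ v 1}) (hv : v.1 1 = 0),
      ∀ y ∈ F, y ≠ h v → ∀ t : ℝ, ∀ ht : 0 < t,
        angle (h v) (h ⟨(v.1 + EuclideanSpace.single 1 t : EuclideanSpace ℝ (Fin 2)), by
          have h1 : (v.1 + EuclideanSpace.single 1 t : EuclideanSpace ℝ (Fin 2)) 1
              = v.1 1 + t := by
            simp [EuclideanSpace.single_apply]
          rw [h1, hv, zero_add]; exact ht.le⟩) y = π / 2

/-- The model Euclidean sector of angle `θ`: the convex region of `E²` bounded by two rays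
from the origin making angle `θ`. -/
def modelSector (θ : ℝ) : Set (EuclideanSpace ℝ (Fin 2)) :=
  {v | ∃ r φ : ℝ, 0 ≤ r ∧ 0 ≤ φ ∧ φ ≤ θ ∧ v 0 = r * Real.cos φ ∧ v 1 = r * Real.sin φ}

/-- A flat sector of angle `θ` in `X`: an isometrically embedded copy of the model
Euclidean sector of angle `θ`. -/
def IsFlatSector {X : Type*} [MetricSpace X] (θ : ℝ) (S : Set X) : Prop :=
  ∃ f : {v : EuclideanSpace ℝ (Fin 2) // v ∈ modelSector θ} → X,
    Isometry f ∧ Set.range f = S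

/-! ## The space of directions at a point -/

section Directions

variable {Y : Type*} [MetricSpace Y]

/-- Two points determine the same direction at `p` when the angle at `p` between them
vanishes.  (In a CAT(0) space this relation is already an equivalence relation; we take
the generated equivalence relation.) -/
def dirSetoid (p : Y) : Setoid {z : Y // z ≠ p} :=
  Relation.EqvGen.setoid (fun q q' => angle p q.1 q'.1 = 0)

/-- The space of directions at `p`: germs at `p` of geodesics emanating from `p`. -/
def SpaceOfDirections (p : Y) := Quotient (dirSetoid p)

/-- The direction at `p` pointing towards `y`. -/
def dirOf (p : Y) (y : Y) (h : y ≠ p) : SpaceOfDirections p :=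
  Quotient.mk (dirSetoid p) ⟨y, h⟩

/-- The angle between two directions at `p`. -/
def dirAngle {p : Y} (d d' : SpaceOfDirections p) : ℝ :=
  angle p d.out.1 d'.out.1

/-- The topology on the space of directions induced by the angle metric. -/
def dirTopology (p : Y) : TopologicalSpace (SpaceOfDirections p) :=
  TopologicalSpace.generateFrom
    {U | ∃ (d : SpaceOfDirections p) (ε : ℝ), U = {d' | dirAngle d d' < ε}}

/-- `Σ_p F`: the set of directions at `p` pointing into a subset `F`. -/
def dirSet (p : Y) (F : Set Y) : Set (SpaceOfDirections p) :=
  {d | ∃ (q : Y) (hq : q ≠ p), q ∈ F ∧ dirOf p q hq = d}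

end Directions

/-! ## STATEMENT 12: first variation of angles along a geodesic -/


/-- cosine of the comparison angle -/
def kcos [MetricSpace X] (p x y : X) : ℝ :=
  (dist p x ^ 2 + dist p y ^ 2 - dist x y ^ 2) / (2 * dist p x * dist p y)

theorem cangle_eq_kcos [MetricSpace X] (p x y : X) : cangle p x y = Real.arccos (kcos p x y) := rfl

theorem kcos_comm [MetricSpace X] (p x y : X) : kcos p x y = kcos p y x := by
  unfold kcos
  rw [dist_comm x y]
  congr 1 <;> ring

theorem kcos_le_one [MetricSpace X] {p x y : X} (hx : x ≠ p) (hy : y ≠ p) : kcos p x y ≤ 1 := by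
  have h1 : 0 < dist p x := dist_pos.2 hx.symm
  have h2 : 0 < dist p y := dist_pos.2 hy.symm
  unfold kcos
  rw [div_le_one (by positivity)]
  have h3 := dist_triangle p x y
  have h4 := dist_triangle p y x
  rw [dist_comm y x] at h4
  have : |dist p x - dist p y| ≤ |dist x y| := by
    rw [abs_of_nonneg (dist_nonneg (x := x))]
    exact abs_le.2 ⟨by linarith, by linarith⟩
  nlinarith [sq_le_sq.2 this]

theorem neg_one_le_kcos [MetricSpace X] {p x y : X} (hx : x ≠ p) (hy : y ≠ p) :
    -1 ≤ kcos p x y := by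
  have h1 : 0 < dist p x := dist_pos.2 hx.symm
  have h2 : 0 < dist p y := dist_pos.2 hy.symm
  unfold kcos
  rw [le_div_iff₀ (by positivity)]
  have h3 := dist_triangle x p y
  rw [dist_comm x p] at h3
  have h5 : 0 ≤ dist x y := dist_nonneg
  nlinarith

theorem stewart_param [MetricSpace X] (hX : CAT0Space X) {p q w : X} {f : ℝ → X}
    (hf : IsGeodesicSegment f p q) {s : ℝ} (hs : s ∈ Set.Icc 0 (dist p q)) :
    dist p q * dist w (f s) ^ 2 ≤ (dist p q - s) * dist w p ^ 2 + s * dist w q ^ 2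
      - s * (dist p q - s) * dist p q := by
  obtain ⟨h0, h1, hd⟩ := hf
  set l := dist p q with hl
  have hl0 : 0 ≤ l := dist_nonneg
  set G : ℝ → ℝ := fun s => l * dist w (f s) ^ 2 - (l - s) * dist w p ^ 2 - s * dist w q ^ 2
      + s * (l - s) * l with hG
  have hfc : ContinuousOn f (Set.Icc 0 l) := by
    have : LipschitzOnWith 1 f (Set.Icc 0 l) := by
      apply LipschitzOnWith.of_dist_le_mul
      intro a ha b hb
      rw [hd a ha b hb, Real.dist_eq]; simp
    exact this.continuousOn
  have hGc : ContinuousOn G (Set.Icc 0 l) := by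
    have : ContinuousOn (fun s => dist w (f s)) (Set.Icc 0 l) := 
      (Continuous.dist continuous_const continuous_id).comp_continuousOn hfc
    fun_prop
  obtain ⟨m, hm, hmax⟩ := isCompact_Icc.exists_isMaxOn (Set.nonempty_Icc.2 hl0) hGc
  have hG0 : G 0 = 0 := by simp [hG, h0]
  have hGl : G l = 0 := by simp [hG, h1]
  have hmid : ∀ a ∈ Set.Icc 0 l, ∀ b ∈ Set.Icc 0 l, G ((a + b) / 2) ≤ (G a + G b) / 2 := by
    intro a ha b hb
    have hab : (a + b) / 2 ∈ Set.Icc 0 l :=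
      ⟨by linarith [ha.1, hb.1], by linarith [ha.2, hb.2]⟩
    have e1 : dist (f a) (f ((a + b) / 2)) = dist (f a) (f b) / 2 := by
      rw [hd a ha _ hab, hd a ha b hb]
      rw [show a - (a + b) / 2 = (a - b) / 2 by ring, abs_div, abs_two]
    have e2 : dist (f b) (f ((a + b) / 2)) = dist (f a) (f b) / 2 := by
      rw [hd b hb _ hab, hd a ha b hb]
      rw [show b - (a + b) / 2 = -((a - b) / 2) by ring, abs_neg, abs_div, abs_two]
    have := hX.2 w (f a) (f b) _ e1 e2
    rw [hd a ha b hb, sq_abs] at this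
    have := mul_le_mul_of_nonneg_left this hl0
    simp only [hG]
    nlinarith
  have hM : G m ≤ 0 := by
    rcases le_total m (l - m) with h | h
    · have h2 : 2 * m ∈ Set.Icc 0 l := ⟨by linarith [hm.1], by linarith⟩
      have := hmid 0 ⟨le_rfl, hl0⟩ (2 * m) h2
      rw [show (0 + 2 * m) / 2 = m by ring, hG0] at this
      have := hmax h2
      simp only [Set.mem_ofPred_eq] at this
      linarith
    · have h2 : 2 * m - l ∈ Set.Icc 0 l := ⟨by linarith, by linarith [hm.2]⟩
      have := hmid l ⟨hl0, le_rfl⟩ (2 * m - l) h2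
      rw [show (l + (2 * m - l)) / 2 = m by ring, hGl] at this
      have := hmax h2
      simp only [Set.mem_ofPred_eq] at this
      linarith
  have h3 : G s ≤ G m := hmax hs
  have h4 : G s ≤ 0 := h3.trans hM
  simp only [hG] at h4
  linarith

theorem eq_of_mem_seg [MetricSpace X] (hX : CAT0Space X) {p q m : X} {f : ℝ → X}
    (hf : IsGeodesicSegment f p q) (hpq : p ≠ q) (hm : dist p m + dist m q = dist p q) :
    f (dist p m) = m := by
  have hl : 0 < dist p q := dist_pos.2 hpq
  have := stewart_param hX (w := m) hf (s := dist p m) ⟨dist_nonneg, by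
    linarith [dist_nonneg (x := m) (y := q)]⟩
  rw [dist_comm m p] at this
  have e : dist m q = dist p q - dist p m := by linarith
  rw [e] at this
  have h2 : dist p q * dist m (f (dist p m)) ^ 2 ≤ 0 := by nlinarith
  have h3 : dist m (f (dist p m)) ^ 2 ≤ 0 := by
    by_contra h
    push Not at h
    nlinarith [mul_pos hl h]
  have h4 : dist m (f (dist p m)) = 0 := by
    have := sq_nonneg (dist m (f (dist p m)))
    exact pow_eq_zero_iff (two_ne_zero) |>.1 (le_antisymm h3 this)
  exact (dist_eq_zero.1 h4).symm

theorem stewart [MetricSpace X] (hX : CAT0Space X) (w : X) {p q m : X} (hpq : p ≠ q)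
    (hm : dist p m + dist m q = dist p q) :
    dist p q * dist w m ^ 2 ≤ dist m q * dist w p ^ 2 + dist p m * dist w q ^ 2
      - dist p m * dist m q * dist p q := by
  obtain ⟨f, hf⟩ := hX.1 p q
  have := stewart_param hX (w := w) hf (s := dist p m) ⟨dist_nonneg, by
    linarith [dist_nonneg (x := m) (y := q)]⟩
  rw [eq_of_mem_seg hX hf hpq hm] at this
  have e : dist p q - dist p m = dist m q := by linarith
  rwa [e] at this

theorem ne_of_mem_seg [MetricSpace X] {p x x' : X} (h : x' ∈ geodesicSegSet p x) (h' : x' ≠ p) :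
    x ≠ p := by
  rintro rfl
  simp only [geodesicSegSet, Set.mem_ofPred_eq, dist_self] at h
  rw [dist_comm x' x] at h
  exact h' (dist_eq_zero.1 (by linarith : dist x x' = 0)).symm

theorem kcos_mono_left [MetricSpace X] (hX : CAT0Space X) {p x x' y : X}
    (h : x' ∈ geodesicSegSet p x) (h' : x' ≠ p) (hy : y ≠ p) : kcos p x y ≤ kcos p x' y := by
  have hx := ne_of_mem_seg h h'
  have h1 : 0 < dist p x := dist_pos.2 hx.symm
  have h2 : 0 < dist p y := dist_pos.2 hy.symm
  have h3 : 0 < dist p x' := dist_pos.2 h'.symm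
  have h4 := stewart hX y hx.symm h
  have h5 : dist p x' + dist x' x = dist p x := h
  unfold kcos
  rw [div_le_div_iff₀ (by positivity) (by positivity)]
  rw [dist_comm y x', dist_comm y x, dist_comm y p] at h4
  have e : dist x' x = dist p x - dist p x' := by linarith
  rw [e] at h4
  nlinarith

theorem kcos_mono_right [MetricSpace X] (hX : CAT0Space X) {p x y y' : X}
    (h : y' ∈ geodesicSegSet p y) (h' : y' ≠ p) (hx : x ≠ p) : kcos p x y ≤ kcos p x y' := by
  rw [kcos_comm p x y, kcos_comm p x y']
  exact kcos_mono_left hX h h' hx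

theorem angle_nonneg' [MetricSpace X] (p x y : X) : 0 ≤ angle p x y := by
  apply Real.sInf_nonneg
  rintro θ ⟨x', -, y', -, -, -, rfl⟩
  exact Real.arccos_nonneg _

theorem angle_le_cangle' [MetricSpace X] {p x y : X} (hx : x ≠ p) (hy : y ≠ p) :
    angle p x y ≤ cangle p x y := by
  apply csInf_le
  · refine ⟨0, ?_⟩
    rintro θ ⟨x', -, y', -, -, -, rfl⟩
    exact Real.arccos_nonneg _
  · exact ⟨x, by simp [geodesicSegSet], y, by simp [geodesicSegSet], hx, hy, rfl⟩

theorem angle_lower [MetricSpace X] (hX : CAT0Space X) {p x y z : X} (hx : x ≠ p) (hy : y ≠ p)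
    (hz : z ≠ p) (hp : dist x p + dist p y = dist x y) :
    π - cangle p y z ≤ angle p x z := by
  apply le_csInf
  · exact ⟨_, x, by simp [geodesicSegSet], z, by simp [geodesicSegSet], hx, hz, rfl⟩
  rintro θ ⟨x', hx', z', hz', hx'p, hz'p, rfl⟩
  have hx'' : dist p x' + dist x' x = dist p x := hx'
  have hb : dist x' p + dist p y = dist x' y := by
    apply le_antisymm _ (dist_triangle _ _ _)
    have := dist_triangle x x' y
    rw [dist_comm x x'] at this
    rw [dist_comm p x', dist_comm p x] at hx''
    linarith
  have h1 : 0 < dist p x' := dist_pos.2 hx'p.symm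
  have h2 : 0 < dist p y := dist_pos.2 hy.symm
  have h3 : 0 < dist p z' := dist_pos.2 hz'p.symm
  have hne : x' ≠ y := by
    rintro rfl
    rw [dist_self, dist_comm x' p] at hb
    linarith
  have hs := stewart hX z' hne hb
  have hk : kcos p x' z' + kcos p y z' ≤ 0 := by
    unfold kcos
    rw [div_add_div _ _ (by positivity) (by positivity)]
    apply div_nonpos_of_nonpos_of_nonneg _ (by positivity)
    rw [← hb, dist_comm z' p, dist_comm x' p, dist_comm z' x', dist_comm z' y] at hs
    have : dist p y * (dist p x' ^ 2 + dist p z' ^ 2 - dist x' z' ^ 2) +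
      dist p x' * (dist p y ^ 2 + dist p z' ^ 2 - dist y z' ^ 2) ≤ 0 := by nlinarith
    nlinarith
  have hm := kcos_mono_right hX hz' hz'p hy
  have : kcos p x' z' ≤ - kcos p y z := by linarith
  have := Real.arccos_le_arccos this
  rw [Real.arccos_neg] at this
  simpa only [cangle_eq_kcos] using this

theorem angle_limit_along_geodesic
    {X : Type*} [MetricSpace X] (hX : CAT0Space X)
    (x y z : X) (hxy : x ≠ y) (hxz : x ≠ z)
    (c : ℝ → X) (hc : IsGeodesicSegment c x y) :
    Filter.Tendsto (fun t => angle (c t) x z) (nhdsWithin 0 (Set.Ioi 0))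
        (nhds (π - angle x y z)) ∧
      Filter.Tendsto (fun t => cangle (c t) x z) (nhdsWithin 0 (Set.Ioi 0))
        (nhds (π - angle x y z)) := by
  have ha : 0 < dist x y := dist_pos.2 hxy
  have hL : 0 < dist x z := dist_pos.2 hxz
  obtain ⟨c0, c1, cd⟩ := id hc
  have hd0 : ∀ s ∈ Set.Icc 0 (dist x y), dist x (c s) = s := by
    intro s hs
    have := cd 0 ⟨le_rfl, ha.le⟩ s hs
    rw [c0, zero_sub, abs_neg, abs_of_nonneg hs.1] at this
    exact this
  have hbt : ∀ t ∈ Set.Icc 0 (dist x y), ∀ s ∈ Set.Icc 0 (dist x y), t ≤ s →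
      dist x (c t) + dist (c t) (c s) = dist x (c s) := by
    intro t ht s hs hts
    rw [hd0 t ht, hd0 s hs, cd t ht s hs, abs_sub_comm, abs_of_nonneg (by linarith)]
    ring
  -- small parameters
  have hsmall : ∀ r > 0, ∀ᶠ t in nhdsWithin (0:ℝ) (Set.Ioi 0), 0 < t ∧ t < r := by
    intro r hr
    exact Ioo_mem_nhdsGT hr
  have hne : ∀ t, 0 < t → t ≤ dist x y → c t ≠ x := by
    intro t h0 h1 h
    have := hd0 t ⟨h0.le, h1⟩
    rw [h, dist_self] at this
    linarith
  have hid : Filter.Tendsto (fun t : ℝ => t) (nhdsWithin 0 (Set.Ioi 0)) (nhds 0) :=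
    tendsto_nhdsWithin_of_tendsto_nhds tendsto_id
  have hcx : Filter.Tendsto c (nhdsWithin 0 (Set.Ioi 0)) (nhds x) := by
    rw [tendsto_iff_dist_tendsto_zero]
    refine hid.congr' ?_
    filter_upwards [hsmall _ ha] with t ht
    rw [dist_comm, hd0 t ⟨ht.1.le, ht.2.le⟩]
  have hφ : ∀ w, Filter.Tendsto (fun t => dist (c t) w) (nhdsWithin 0 (Set.Ioi 0))
      (nhds (dist x w)) := fun w => hcx.dist tendsto_const_nhds
  -- comparison angles at x
  have hA : Filter.Tendsto (fun s => cangle x (c s) z) (nhdsWithin 0 (Set.Ioi 0))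
      (nhds (angle x y z)) := by
    rw [tendsto_order]
    constructor
    · intro b hb
      filter_upwards [hsmall _ ha] with s hs
      refine hb.trans_le ?_
      have hmem : c s ∈ geodesicSegSet x y := by
        have := hbt s ⟨hs.1.le, hs.2.le⟩ _ ⟨ha.le, le_rfl⟩ hs.2.le
        rwa [c1] at this
      apply csInf_le
      · refine ⟨0, ?_⟩
        rintro θ ⟨x', -, y', -, -, -, rfl⟩
        exact Real.arccos_nonneg _
      · exact ⟨c s, hmem, z, by simp [geodesicSegSet], hne s hs.1 hs.2.le, hxz.symm, rfl⟩
    · intro b hb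
      obtain ⟨θ, ⟨x', hx', z', hz', hx'x, hz'x, rfl⟩, hθ⟩ := exists_lt_of_csInf_lt
        (s := {θ : ℝ | ∃ x' ∈ geodesicSegSet x y, ∃ y' ∈ geodesicSegSet x z,
          x' ≠ x ∧ y' ≠ x ∧ θ = cangle x x' y'})
        ⟨_, y, by simp [geodesicSegSet], z, by simp [geodesicSegSet], hxy.symm, hxz.symm, rfl⟩ hb
      have hr : 0 < dist x z' := dist_pos.2 hz'x.symm
      have hx'' : dist x x' + dist x' y = dist x y := hx'
      have hz'' : dist x z' + dist z' z = dist x z := hz'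
      have hu : 0 < dist x x' := dist_pos.2 hx'x.symm
      have hcx' := eq_of_mem_seg hX hc hxy hx'
      have huy : dist x x' ≤ dist x y := by linarith [dist_nonneg (x := x') (y := y)]
      have hlim : Filter.Tendsto (fun s => Real.arccos
          ((2 * dist x z' * kcos x x' z' - s) / (dist x z' + dist (c s) z')))
          (nhdsWithin 0 (Set.Ioi 0)) (nhds (cangle x x' z')) := by
        have h1 : Filter.Tendsto (fun s =>
          ((2 * dist x z' * kcos x x' z' - s) / (dist x z' + dist (c s) z')))
          (nhdsWithin 0 (Set.Ioi 0)) (nhds ((2 * dist x z' * kcos x x' z' - 0) /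
            (dist x z' + dist x z'))) :=
          (tendsto_const_nhds.sub hid).div (tendsto_const_nhds.add (hφ z')) (by positivity)
        have e : (2 * dist x z' * kcos x x' z' - 0) / (dist x z' + dist x z') = kcos x x' z' := by
          field_simp
          ring
        rw [e] at h1
        exact (Real.continuous_arccos.tendsto _).comp h1
      filter_upwards [hlim.eventually (gt_mem_nhds hθ), hsmall _ hu] with s hs1 hs
      refine lt_of_le_of_lt ?_ hs1
      rw [cangle_eq_kcos]
      apply Real.arccos_le_arccos
      have hsI : s ∈ Set.Icc 0 (dist x y) := ⟨hs.1.le, by linarith [hs.2]⟩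
      have hmem : c s ∈ geodesicSegSet x x' := by
        have := hbt s hsI (dist x x') ⟨hu.le, huy⟩ hs.2.le
        rwa [hcx'] at this
      have hk := kcos_mono_left hX hmem (hne s hs.1 hsI.2) hz'x
      set κ := kcos x x' z'
      have hs0 := hs.1
      unfold kcos at hk ⊢
      rw [hd0 s hsI] at hk ⊢
      rw [le_div_iff₀ (by positivity)] at hk
      have t1 := dist_triangle (c s) z' z
      have t2 := dist_triangle x (c s) z'
      have t3 := dist_triangle (c s) x z'
      rw [dist_comm (c s) x] at t3
      rw [hd0 s hsI] at t2 t3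
      have hD : 0 ≤ dist (c s) z' := dist_nonneg
      have hP : 0 ≤ dist (c s) z := dist_nonneg
      set D := dist (c s) z'
      set r := dist x z'
      set L := dist x z
      set P := dist (c s) z
      have hPle : P ≤ L - (r - D) := by linarith
      have step1 : (2 * r * κ - s) / (r + D) ≤ (r - D) / s := by
        rw [div_le_div_iff₀ (by positivity) hs0]
        nlinarith
      refine step1.trans ?_
      rw [div_le_div_iff₀ hs0 (by positivity)]
      have hP2 : P ^ 2 ≤ (L - (r - D)) ^ 2 := pow_le_pow_left₀ hP hPle 2
      have hsq : (r - D) ^ 2 ≤ s ^ 2 := by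
        apply sq_le_sq'
        · linarith
        · linarith
      have : (r - D) * (2 * L) ≤ s ^ 2 + L ^ 2 - P ^ 2 := by nlinarith
      nlinarith
  have hα0 : 0 ≤ angle x y z := angle_nonneg' x y z
  have hαπ : angle x y z ≤ π := (angle_le_cangle' hxy.symm hxz.symm).trans (Real.arccos_le_pi _)
  have hK : Filter.Tendsto (fun s => kcos x (c s) z) (nhdsWithin 0 (Set.Ioi 0))
      (nhds (Real.cos (angle x y z))) := by
    refine ((Real.continuous_cos.tendsto _).comp hA).congr' ?_
    filter_upwards [hsmall _ ha] with s hs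
    have := hne s hs.1 hs.2.le
    simp only [Function.comp, cangle_eq_kcos]
    exact Real.cos_arccos (neg_one_le_kcos this hxz.symm) (kcos_le_one this hxz.symm)
  have hcz : ∀ᶠ t in nhdsWithin (0:ℝ) (Set.Ioi 0), z ≠ c t := by
    filter_upwards [(hφ z).eventually (lt_mem_nhds hL)] with t ht h
    rw [← h, dist_self] at ht
    exact lt_irrefl _ ht
  have hB : Filter.Tendsto (fun t => cangle (c t) x z) (nhdsWithin 0 (Set.Ioi 0))
        (nhds (π - angle x y z)) := by
    have h1 : Filter.Tendsto (fun t => -kcos x (c t) z * (dist x z / dist (c t) z)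
        + t / dist (c t) z) (nhdsWithin 0 (Set.Ioi 0))
        (nhds (-Real.cos (angle x y z) * (dist x z / dist x z) + 0 / dist x z)) :=
      (hK.neg.mul (tendsto_const_nhds.div (hφ z) hL.ne')).add (hid.div (hφ z) hL.ne')
    rw [div_self hL.ne', zero_div, mul_one, add_zero] at h1
    have h2 := (Real.continuous_arccos.tendsto _).comp h1
    rw [Real.arccos_neg, Real.arccos_cos hα0 hαπ] at h2
    refine h2.congr' ?_
    filter_upwards [hsmall _ ha, hcz] with t ht hz
    have hP : 0 < dist (c t) z := dist_pos.2 hz.symm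
    have ht0 := ht.1
    simp only [Function.comp, cangle_eq_kcos]
    congr 1
    unfold kcos
    rw [dist_comm (c t) x, hd0 t ⟨ht.1.le, ht.2.le⟩]
    field_simp
    ring
  refine ⟨?_, hB⟩
  rw [tendsto_order]
  constructor
  · intro b hb
    have hb' : angle x y z < π - b := by linarith
    obtain ⟨s, hs1, hs⟩ := ((hA.eventually (gt_mem_nhds hb')).and (hsmall _ ha)).exists
    have hsI : s ∈ Set.Icc 0 (dist x y) := ⟨hs.1.le, hs.2.le⟩
    have hsx : 0 < dist x (c s) := dist_pos.2 (hne s hs.1 hs.2.le).symm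
    have hlim : Filter.Tendsto (fun t => cangle (c t) (c s) z) (nhdsWithin 0 (Set.Ioi 0))
        (nhds (cangle x (c s) z)) := by
      refine (Real.continuous_arccos.tendsto _).comp ?_
      refine Filter.Tendsto.div ?_ ?_ (by positivity)
      · exact (((hφ _).pow 2).add ((hφ z).pow 2)).sub tendsto_const_nhds
      · exact (tendsto_const_nhds.mul (hφ _)).mul (hφ z)
    filter_upwards [hlim.eventually (gt_mem_nhds hs1), hsmall _ hs.1, hcz] with t h1 ht hz
    have htI : t ∈ Set.Icc 0 (dist x y) := ⟨ht.1.le, by linarith [ht.2, hs.2]⟩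
    have hst : c s ≠ c t := by
      intro h
      have e1 := hd0 s hsI
      rw [h, hd0 t htI] at e1
      linarith [ht.2]
    have := angle_lower hX (hne t ht.1 htI.2).symm hst hz (hbt t htI s hsI ht.2.le)
    linarith
  · intro b hb
    filter_upwards [hB.eventually (gt_mem_nhds hb), hsmall _ ha, hcz] with t h1 ht hz
    exact (angle_le_cangle' (hne t ht.1 ht.2.le).symm hz).trans_lt h1
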